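/- Fix an integer n ≥ 2 and let B(q) be the n×n matrix over ℚ(q) with B(q)_{ii} = [4]_q for 1 ≤ i ≤ n−1, B(q)_{nn} = [2]_q, B(q)_{i,i+1} = B(q)_{i+1,i} = −[2]_q for 1 ≤ i ≤ n−1, and all other entries 0 (the symmetrized q-Cartan matrix of type C_n in the paper's conventions). Then B(q) is invertible and every entry of the matrix [2(2n−1)]_q · B(q)^{−1} lies in ℕ[q,q^{−1}]. -/

import Mathlib

/-!
Write `[k]` for the quantum integer `[k]_{q²}`, extended to all `k ∈ ℤ` by its closed form.
Since `[4]_q = [2]_q (q² + q⁻²)`, the matrix `B` is `[2]_q` times a tridiagonal matrix with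
diagonal `q² + q⁻²` (last entry `1`) and off-diagonal entries `-1`, so it is inverted by the
discrete Green's function recipe: `u k = [k]` and `w k = [2n-1-k] + [k]` both solve the
recurrence `(q² + q⁻²) f k = f (k-1) + f (k+1)`, `u` vanishes at `0`, and `w (n-1) = w n`, which is
the boundary condition of the last row. The Wronskian
`[2]_q (u (k+1) w k - u k w (k+1))` is the constant `[2(2n-1)]_q`. Hence, with `1`-based indices,
`[2(2n-1)]_q (B⁻¹)_{ij} = [i] ([2n-1-j] + [j])` for `i ≤ j`, which visibly lies in `ℕ[q,q⁻¹]`.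
-/

/-- The variable `q`, as an element of the field `ℚ(q)` of rational functions. -/
noncomputable def qq : RatFunc ℚ := RatFunc.X

/-- The quantum number `[m]_q = (q^m − q^{−m})/(q − q^{−1}) = Σ_{i=0}^{m−1} q^{m−1−2i}`. -/
noncomputable def qNum (m : ℕ) : RatFunc ℚ :=
  ∑ i ∈ Finset.range m, qq ^ ((m : ℤ) - 1 - 2 * (i : ℤ))

/-- An element of `ℚ(q)` lies in `ℕ[q,q^{−1}]` if it is a Laurent polynomial in `q`
with nonnegative integer coefficients. -/
def IsNatLaurent (f : RatFunc ℚ) : Prop :=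
  ∃ c : ℤ →₀ ℕ, f = c.sum fun k n => (n : RatFunc ℚ) * qq ^ k

lemma qq_ne_zero : qq ≠ 0 := RatFunc.X_ne_zero

lemma qq_pow_ne_one {m : ℕ} (hm : 0 < m) : qq ^ m ≠ 1 := by
  intro h
  have h2 : algebraMap (Polynomial ℚ) (RatFunc ℚ) (Polynomial.X ^ m)
      = algebraMap (Polynomial ℚ) (RatFunc ℚ) 1 := by
    rw [map_pow, RatFunc.algebraMap_X, map_one]; exact h
  have h3 := RatFunc.algebraMap_injective ℚ h2
  have h4 := congrArg Polynomial.natDegree h3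
  simp at h4
  omega

lemma qq_sub_ne_zero {m : ℕ} (hm : 0 < m) : qq ^ (m : ℤ) - qq ^ (-(m : ℤ)) ≠ 0 := by
  intro h
  apply qq_pow_ne_one (m := m + m) (by omega)
  have hp : qq ^ m ≠ 0 := pow_ne_zero _ qq_ne_zero
  rw [zpow_neg, zpow_natCast, sub_eq_zero] at h
  rw [pow_add]
  nth_rewrite 1 [h]
  exact inv_mul_cancel₀ hp

lemma geom_closed (x : RatFunc ℚ) (hx : x ≠ 0) (m : ℕ) :
    (∑ i ∈ Finset.range m, x ^ ((m : ℤ) - 1 - 2 * (i : ℤ))) * (x - x⁻¹)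
      = x ^ (m : ℤ) - x ^ (-(m : ℤ)) := by
  rw [Finset.sum_mul]
  have h : ∀ i ∈ Finset.range m, x ^ ((m : ℤ) - 1 - 2 * (i : ℤ)) * (x - x⁻¹)
      = x ^ ((m : ℤ) - 2 * (i : ℤ)) - x ^ ((m : ℤ) - 2 * ((i + 1 : ℕ) : ℤ)) := by
    intro i _
    rw [mul_sub, ← zpow_add_one₀ hx, ← zpow_sub_one₀ hx]
    congr 2 <;> push_cast <;> ring
  rw [Finset.sum_congr rfl h, Finset.sum_range_sub' (fun i : ℕ => x ^ ((m : ℤ) - 2 * (i : ℤ)))]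
  congr 2; ring

lemma qq_sub_inv_ne_zero : qq - qq⁻¹ ≠ 0 := by
  simpa using qq_sub_ne_zero (m := 1) one_pos

lemma qNum_eq (m : ℕ) : qNum m = (qq ^ (m : ℤ) - qq ^ (-(m : ℤ))) / (qq - qq⁻¹) := by
  rw [eq_div_iff qq_sub_inv_ne_zero]
  exact geom_closed qq qq_ne_zero m

lemma qNum_ne_zero {m : ℕ} (hm : 0 < m) : qNum m ≠ 0 := by
  rw [qNum_eq]
  exact div_ne_zero (qq_sub_ne_zero hm) qq_sub_inv_ne_zero

/-- The quantum integer `[k]_{q²}`, for an arbitrary integer `k`. -/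
noncomputable def sNum (k : ℤ) : RatFunc ℚ :=
  (qq ^ (2 * k) - qq ^ (-(2 * k))) / (qq ^ (2 : ℤ) - qq ^ (-2 : ℤ))

lemma sNum_den_ne_zero : qq ^ (2 : ℤ) - qq ^ (-2 : ℤ) ≠ 0 := by
  simpa using qq_sub_ne_zero (m := 2) two_pos

lemma sNum_zero : sNum 0 = 0 := by simp [sNum]

lemma sNum_natCast (m : ℕ) :
    sNum m = ∑ i ∈ Finset.range m, qq ^ (2 * ((m : ℤ) - 1 - 2 * (i : ℤ))) := by
  rw [sNum, div_eq_iff sNum_den_ne_zero]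
  have h := geom_closed (qq ^ (2 : ℤ)) (zpow_ne_zero _ qq_ne_zero) m
  simp only [← zpow_mul, ← zpow_neg] at h
  rw [h]
  congr 2; ring

/-- The evaluation map `ℕ[T;T⁻¹] → ℚ(q)`, whose range is `ℕ[q,q⁻¹]`. -/
noncomputable def natLaurentEval : AddMonoidAlgebra ℕ ℤ →ₐ[ℕ] RatFunc ℚ :=
  AddMonoidAlgebra.lift ℕ (RatFunc ℚ) ℤ
    { toFun := fun k => qq ^ (Multiplicative.toAdd k)
      map_one' := by simp
      map_mul' := fun a b => by simp [zpow_add₀ qq_ne_zero] }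

lemma isNatLaurent_iff (f : RatFunc ℚ) : IsNatLaurent f ↔ f ∈ natLaurentEval.range := by
  constructor
  · rintro ⟨c, rfl⟩
    exact ⟨AddMonoidAlgebra.ofCoeff c, by simp [natLaurentEval, AddMonoidAlgebra.lift_apply']⟩
  · rintro ⟨c, rfl⟩
    exact ⟨c.coeff, by simp [natLaurentEval, AddMonoidAlgebra.lift_apply']⟩

lemma sNum_mem (m : ℕ) : sNum m ∈ natLaurentEval.range := by
  rw [sNum_natCast]
  refine Subalgebra.sum_mem _ fun i _ => ?_
  rw [← isNatLaurent_iff]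
  exact ⟨Finsupp.single (2 * ((m : ℤ) - 1 - 2 * (i : ℤ))) 1, by simp⟩

lemma sNum_rec (k : ℤ) :
    qNum 4 * sNum k = qNum 2 * sNum (k - 1) + qNum 2 * sNum (k + 1) := by
  have h0 := qq_ne_zero
  have hP : qq ^ (2 * k) ≠ 0 := zpow_ne_zero _ h0
  simp only [qNum_eq, sNum, mul_sub, mul_add, zpow_neg, zpow_sub₀ h0, zpow_add₀ h0]
  generalize qq ^ (2 * k) = P at *
  have h1 := qq_sub_inv_ne_zero
  have h2 := sNum_den_ne_zero
  rw [zpow_neg] at h2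
  rw [div_mul_div_comm, div_mul_div_comm, div_mul_div_comm, ← add_div]
  congr 1
  norm_cast
  field_simp
  ring

/-- The second solution of the recurrence, the one adapted to the last row of the matrix. -/
noncomputable def wNum (n k : ℤ) : RatFunc ℚ := sNum (2 * n - 1 - k) + sNum k

lemma wNum_rec (n k : ℤ) :
    qNum 4 * wNum n k = qNum 2 * wNum n (k - 1) + qNum 2 * wNum n (k + 1) := by
  have h1 := sNum_rec k
  have h2 := sNum_rec (2 * n - 1 - k)
  have e1 : 2 * n - 1 - (k - 1) = 2 * n - 1 - k + 1 := by ring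
  have e2 : 2 * n - 1 - (k + 1) = 2 * n - 1 - k - 1 := by ring
  rw [wNum, wNum, wNum, e1, e2]
  linear_combination h1 + h2

lemma wNum_boundary (n : ℤ) : wNum n (n - 1) = wNum n n := by
  have e1 : 2 * n - 1 - (n - 1) = n := by ring
  have e2 : 2 * n - 1 - n = n - 1 := by ring
  rw [wNum, wNum, e1, e2, add_comm]

/-- The Wronskian of the two solutions is constant. -/
lemma wronskian (n : ℕ) (hn : 2 ≤ n) (k : ℤ) :
    qNum 2 * (sNum (k + 1) * wNum n k - sNum k * wNum n (k + 1)) = qNum (2 * (2 * n - 1)) := by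
  have h0 := qq_ne_zero
  have e : ((2 * (2 * n - 1) : ℕ) : ℤ) = 2 * (n : ℤ) + 2 * (n : ℤ) - 2 := by omega
  have e1 : 2 * (2 * (n : ℤ) - 1 - k) = 2 * n + 2 * n - 2 - 2 * k := by ring
  have e2 : 2 * (2 * (n : ℤ) - 1 - (k + 1)) = 2 * n + 2 * n - 2 - 2 * k - 2 := by ring
  have e3 : 2 * (k + 1) = 2 * k + 2 := by ring
  have hP : qq ^ (2 * k) ≠ 0 := zpow_ne_zero _ h0
  have hN : qq ^ (2 * (n : ℤ)) ≠ 0 := zpow_ne_zero _ h0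
  have h1 := qq_sub_inv_ne_zero
  have h2 := sNum_den_ne_zero
  simp only [qNum_eq, wNum, sNum, e, e1, e2, e3]
  simp only [zpow_neg, zpow_sub₀ h0, zpow_add₀ h0] at h2 ⊢
  generalize qq ^ (2 * k) = P at *
  generalize qq ^ (2 * (n : ℤ)) = N at *
  rw [← add_div, ← add_div, div_mul_div_comm, div_mul_div_comm, ← sub_div, div_mul_div_comm,
    div_eq_div_iff (mul_ne_zero h1 (mul_ne_zero h2 h2)) h1]
  norm_cast
  field_simp
  ring

/-- The matrix `[2(2n-1)]_q · B⁻¹` on `0`-based natural-number indices. -/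
noncomputable def gEntry (n i j : ℕ) : RatFunc ℚ :=
  sNum ((min i j : ℕ) + 1) * wNum n ((max i j : ℕ) + 1)

lemma gEntry_le (n : ℕ) {i j : ℕ} (h : i ≤ j) :
    gEntry n i j = sNum ((i : ℤ) + 1) * wNum n ((j : ℤ) + 1) := by
  rw [gEntry, min_eq_left h, max_eq_right h]

lemma gEntry_ge (n : ℕ) {i j : ℕ} (h : j ≤ i) :
    gEntry n i j = sNum ((j : ℤ) + 1) * wNum n ((i : ℤ) + 1) := by
  rw [gEntry, min_eq_right h, max_eq_left h]

lemma gEntry_mem (n i j : ℕ) (hi : i < n) (hj : j < n) : IsNatLaurent (gEntry n i j) := by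
  rw [isNatLaurent_iff, gEntry, wNum]
  have e : 2 * (n : ℤ) - 1 - ((max i j : ℕ) + 1) = ((2 * n - 2 - max i j : ℕ) : ℤ) := by omega
  rw [e]
  exact_mod_cast mul_mem (sNum_mem (min i j + 1))
    (add_mem (sNum_mem _) (sNum_mem (max i j + 1)))

/-- A row of the product of `B` with `gEntry`, the sum over the tridiagonal band written out;
the second summand drops out in the first row and the third in the last row. -/
lemma row_eq (n i j : ℕ) (hn : 2 ≤ n) (hi : i < n) (hj : j < n) :
    (if i + 1 = n then qNum 2 else qNum 4) * gEntry n i j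
      - qNum 2 * (if i = 0 then 0 else gEntry n (i - 1) j)
      - qNum 2 * (if i + 1 = n then 0 else gEntry n (i + 1) j)
      = if i = j then qNum (2 * (2 * n - 1)) else 0 := by
  have hW := wronskian n hn
  -- Since `u 0 = 0`, the formula for the entry above the diagonal extends to row `-1`.
  have hprev : i ≤ j → (if i = 0 then 0 else gEntry n (i - 1) j)
      = sNum (i : ℤ) * wNum n ((j : ℤ) + 1) := by
    intro h
    rcases Nat.eq_zero_or_pos i with rfl | hpos
    · simp [sNum_zero]
    · rw [if_neg (by omega), gEntry_le n (by omega)]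
      congr 2; omega
  have hprev' : j < i → (if i = 0 then 0 else gEntry n (i - 1) j)
      = sNum ((j : ℤ) + 1) * wNum n (i : ℤ) := by
    intro h
    rw [if_neg (by omega), gEntry_ge n (by omega)]
    congr 2; omega
  have hu := sNum_rec ((i : ℤ) + 1)
  have hw := wNum_rec n ((i : ℤ) + 1)
  rw [add_sub_cancel_right] at hu hw
  by_cases hlast : i + 1 = n
  · have hb := wNum_boundary n
    have e1 : (n : ℤ) - 1 = i := by omega
    have e2 : (n : ℤ) = i + 1 := by omega
    rw [e1] at hb
    have hb' : wNum n (i : ℤ) = wNum n ((i : ℤ) + 1) := by rw [hb]; congr 1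
    rcases lt_or_eq_of_le (show j ≤ i by omega) with h | h
    · rw [hprev' h, if_pos hlast, if_pos hlast, if_neg (by omega), gEntry_ge n h.le, hb']
      ring
    · subst h
      rw [hprev le_rfl, if_pos hlast, if_pos hlast, if_pos rfl, gEntry_ge n le_rfl, ← hW j, hb']
      ring
  · rw [if_neg hlast, if_neg hlast]
    rcases lt_trichotomy i j with h | h | h
    · rw [hprev h.le, if_neg h.ne, gEntry_le n h.le, gEntry_le n h]
      push_cast
      linear_combination wNum n ((j : ℤ) + 1) * hu
    · subst h
      rw [hprev le_rfl, if_pos rfl, gEntry_le n le_rfl, gEntry_ge n (Nat.le_succ i),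
        ← hW ((i : ℤ) + 1)]
      push_cast
      linear_combination wNum n ((i : ℤ) + 1) * hu
    · rw [hprev' h, if_neg h.ne', gEntry_ge n h.le, gEntry_ge n (by omega)]
      push_cast
      linear_combination sNum ((j : ℤ) + 1) * hw

/-- The action of a tridiagonal row on a vector. -/
lemma band_sum (n i : ℕ) (hi : i < n) (a b : RatFunc ℚ) (f : ℕ → RatFunc ℚ) :
    ∑ k ∈ Finset.range n,
      (if i = k then a else if i + 1 = k ∨ k + 1 = i then -b else 0) * f k
      = a * f i - b * (if i = 0 then 0 else f (i - 1))
        - b * (if i + 1 = n then 0 else f (i + 1)) := by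
  have h : ∀ k ∈ Finset.range n,
      (if i = k then a else if i + 1 = k ∨ k + 1 = i then -b else 0) * f k
      = (if i = k then a * f k else 0)
        - b * (if i - 1 = k then (if i = 0 then 0 else f k) else 0)
        - b * (if i + 1 = k then f k else 0) := by
    intro k _
    split_ifs <;> first | omega | ring
  rw [Finset.sum_congr rfl h, Finset.sum_sub_distrib, Finset.sum_sub_distrib, ← Finset.mul_sum,
    ← Finset.mul_sum, Finset.sum_ite_eq, Finset.sum_ite_eq, Finset.sum_ite_eq]
  simp only [Finset.mem_range]
  rw [if_pos hi, if_pos (show i - 1 < n by omega)]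
  congr 2
  split_ifs <;> first | omega | rfl

/-- The symmetrized `q`-Cartan matrix of type `C_n` is invertible, and every entry of
`[2(2n−1)]_q · B(q)⁻¹` lies in `ℕ[q,q⁻¹]`. Indices are `0`-based. -/
theorem typeC_qCartan_inverse (n : ℕ) (hn : 2 ≤ n)
    (B : Matrix (Fin n) (Fin n) (RatFunc ℚ))
    (hB : ∀ i j : Fin n, B i j =
      if i = j then (if i.val + 1 = n then qNum 2 else qNum 4)
      else if i.val + 1 = j.val ∨ j.val + 1 = i.val then -qNum 2
      else 0) :
    IsUnit B ∧ ∀ i j : Fin n, IsNatLaurent (qNum (2 * (2 * n - 1)) * B⁻¹ i j) := by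
  have hL : qNum (2 * (2 * n - 1)) ≠ 0 := qNum_ne_zero (by omega)
  let G : Matrix (Fin n) (Fin n) (RatFunc ℚ) := fun i j => gEntry n i j
  have hBG : B * G = qNum (2 * (2 * n - 1)) • (1 : Matrix (Fin n) (Fin n) (RatFunc ℚ)) := by
    ext i j
    rw [Matrix.mul_apply, Matrix.smul_apply, Matrix.one_apply, smul_eq_mul, mul_ite, mul_one,
      mul_zero]
    simp only [Fin.ext_iff]
    rw [← row_eq n i j hn i.2 j.2, ← band_sum n i i.2 _ _ (fun k => gEntry n k j),
      Finset.sum_range]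
    refine Finset.sum_congr rfl fun k _ => ?_
    rw [hB]
    simp only [Fin.ext_iff, G]
  have hinv : B * ((qNum (2 * (2 * n - 1)))⁻¹ • G) = 1 := by
    rw [Matrix.mul_smul, hBG, smul_smul, inv_mul_cancel₀ hL, one_smul]
  refine ⟨IsUnit.of_mul_eq_one _ hinv, fun i j => ?_⟩
  rw [Matrix.inv_eq_right_inv hinv, Matrix.smul_apply, smul_eq_mul, mul_inv_cancel_left₀ hL]
  exact gEntry_mem n i j i.2 j.2
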